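/- For every d ≥ 1 and every nontrivial (d-1)-cycle Z on [n] over F_2, there exists a collapsible acyclic set F of d-simplices on [n] with ∂F = Z and C(n-1,d) − |F| ≤ C(n-1,d-2) (with the convention C(m,k) = 0 for k < 0). Moreover, there are at least n − 2d distinct such sets F. -/

import Mathlib

open Finset symmDiff

/-- The vertex set `[n] = {1, …, n}`. -/
def rng (n : ℕ) : Finset ℕ := Finset.Icc 1 n

/-- The set of `d`-simplices (i.e. `(d+1)`-element subsets) on the vertex set `V`. -/
def simplices (V : Finset ℕ) (d : ℕ) : Finset (Finset ℕ) :=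
  V.powerset.filter fun σ => σ.card = d + 1

/-- The mod-2 boundary of a set `X` of simplices: the set of faces `τ` of codimension one
(`|τ| + 1 = |σ|`) contained in an odd number of members of `X`. -/
def bd (X : Finset (Finset ℕ)) : Finset (Finset ℕ) :=
  (X.biUnion fun σ => σ.powerset).filter
    fun τ => Odd (X.filter fun σ => τ ⊆ σ ∧ τ.card + 1 = σ.card).card

/-- A set of simplices is acyclic (a forest) over `F_2` if no nonempty subset has
empty boundary. -/
def IsAcyclic (F : Finset (Finset ℕ)) : Prop :=
  ∀ Y ⊆ F, Y ≠ ∅ → bd Y ≠ ∅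

/-- A `d`-hypertree on `V`: a maximal acyclic set of `d`-simplices on `V`. -/
def IsHypertreeOn (V : Finset ℕ) (d : ℕ) (T : Finset (Finset ℕ)) : Prop :=
  T ⊆ simplices V d ∧ IsAcyclic T ∧
    ∀ G, T ⊆ G → G ⊆ simplices V d → IsAcyclic G → G = T

/-- A simple cycle over `F_2`: a nonempty set with empty boundary, no nonempty proper
subset of which has empty boundary. -/
def IsSimpleCycle (Z : Finset (Finset ℕ)) : Prop :=
  Z ≠ ∅ ∧ bd Z = ∅ ∧ ∀ Y ⊂ Z, Y ≠ ∅ → bd Y ≠ ∅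

/-- Collapsibility: `X` can be reduced to `∅` by repeatedly removing a simplex `σ ∈ X`
containing a codimension-one face contained in no other current member of `X`. -/
inductive Collapsible : Finset (Finset ℕ) → Prop
  | empty : Collapsible ∅
  | step (X : Finset (Finset ℕ)) (σ τ : Finset ℕ) (hσ : σ ∈ X) (hτ : τ ⊆ σ)
      (hcard : τ.card + 1 = σ.card) (huniq : ∀ σ' ∈ X, τ ⊆ σ' → σ' = σ)
      (h : Collapsible (X.erase σ)) : Collapsible X

/-- The cone over `X` with apex `v`. -/
def cone (v : ℕ) (X : Finset (Finset ℕ)) : Finset (Finset ℕ) :=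
  X.image (insert v)

/-- The link of the vertex `v` in `X`. -/
def link (v : ℕ) (X : Finset (Finset ℕ)) : Finset (Finset ℕ) :=
  (X.filter fun σ => v ∈ σ).image fun σ => σ.erase v

/-- `fill Z T`: the subset `F ⊆ T` with `∂F = Z` (when it exists; it is unique when `T`
is a hypertree and `Z` a cycle). -/
noncomputable def fill (Z T : Finset (Finset ℕ)) : Finset (Finset ℕ) :=
  if h : ∃ F, F ⊆ T ∧ bd F = Z then h.choose else ∅

/-- The average filling-volume `μ(T)` of a `d`-hypertree `T` on `[n]`. -/
noncomputable def fillVolAvg (n d : ℕ) (T : Finset (Finset ℕ)) : ℝ :=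
  (∑ σ ∈ simplices (rng n) d, ((fill (bd {σ}) T).card : ℝ)) / (n.choose (d + 1) : ℝ)

open Classical in
/-- The cut of `τ` in `T`: the set of `d`-simplices `σ` on `[n]` such that
`T ⊕ {τ} ⊕ {σ}` is a `d`-hypertree on `[n]`. -/
noncomputable def cut (n d : ℕ) (τ : Finset ℕ) (T : Finset (Finset ℕ)) : Finset (Finset ℕ) :=
  (simplices (rng n) d).filter fun σ => IsHypertreeOn (rng n) d ((T ∆ {τ}) ∆ {σ})

theorem mem_bd {X : Finset (Finset ℕ)} {τ : Finset ℕ} :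
    τ ∈ bd X ↔ Odd (X.filter fun σ => τ ⊆ σ ∧ τ.card + 1 = σ.card).card := by
  unfold bd
  rw [Finset.mem_filter]
  constructor
  · exact fun h => h.2
  · intro h
    refine ⟨?_, h⟩
    obtain ⟨σ, hσ⟩ := Finset.card_pos.mp h.pos
    rw [Finset.mem_filter] at hσ
    rw [Finset.mem_biUnion]
    exact ⟨σ, hσ.1, Finset.mem_powerset.mpr hσ.2.1⟩

theorem odd_card_symmDiff (A B : Finset (Finset ℕ)) :
    Odd (A ∆ B).card ↔ ¬ (Odd A.card ↔ Odd B.card) := by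
  have h1 : (A ∆ B).card = (A \ B).card + (B \ A).card := by
    rw [symmDiff_def, Finset.sup_eq_union, Finset.card_union_of_disjoint]
    exact disjoint_sdiff_sdiff
  have h2 := Finset.card_sdiff_add_card_inter A B
  have h3 := Finset.card_sdiff_add_card_inter B A
  rw [Finset.inter_comm B A] at h3
  simp only [Nat.odd_iff]
  omega

theorem bd_symmDiff (X Y : Finset (Finset ℕ)) : bd (X ∆ Y) = bd X ∆ bd Y := by
  ext τ
  have h : ((X ∆ Y).filter fun σ => τ ⊆ σ ∧ τ.card + 1 = σ.card) =
      (X.filter fun σ => τ ⊆ σ ∧ τ.card + 1 = σ.card) ∆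
        (Y.filter fun σ => τ ⊆ σ ∧ τ.card + 1 = σ.card) := by
    ext σ
    simp only [Finset.mem_filter, Finset.mem_symmDiff]
    tauto
  rw [Finset.mem_symmDiff, mem_bd, mem_bd, mem_bd, h, odd_card_symmDiff]
  tauto

theorem bd_subset {V : Finset ℕ} {d : ℕ} {X : Finset (Finset ℕ)}
    (h : X ⊆ V.powersetCard (d + 1)) : bd X ⊆ V.powersetCard d := by
  intro τ hτ
  rw [mem_bd] at hτ
  obtain ⟨σ, hσ⟩ := Finset.card_pos.mp hτ.pos
  rw [Finset.mem_filter] at hσ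
  have := Finset.mem_powersetCard.mp (h hσ.1)
  rw [Finset.mem_powersetCard]
  exact ⟨hσ.2.1.trans this.1, by omega⟩

theorem insert_inj_of {v : ℕ} {a b : Finset ℕ} (ha : v ∉ a) (hb : v ∉ b)
    (h : insert v a = insert v b) : a = b := by
  rw [← Finset.erase_insert ha, h, Finset.erase_insert hb]

theorem mem_cone {v : ℕ} {X : Finset (Finset ℕ)} (hX : ∀ σ ∈ X, v ∉ σ) {τ : Finset ℕ} :
    τ ∈ cone v X ↔ v ∈ τ ∧ τ.erase v ∈ X := by
  unfold cone
  rw [Finset.mem_image]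
  constructor
  · rintro ⟨σ, hσ, rfl⟩
    refine ⟨Finset.mem_insert_self _ _, ?_⟩
    rwa [Finset.erase_insert (hX σ hσ)]
  · rintro ⟨h1, h2⟩
    exact ⟨_, h2, Finset.insert_erase h1⟩

theorem card_cone {v : ℕ} {X : Finset (Finset ℕ)} (hX : ∀ σ ∈ X, v ∉ σ) :
    (cone v X).card = X.card := by
  unfold cone
  apply Finset.card_image_of_injOn
  intro a ha b hb h
  exact insert_inj_of (hX a ha) (hX b hb) h

theorem mem_bd_cone {v : ℕ} {X : Finset (Finset ℕ)} (hX : ∀ σ ∈ X, v ∉ σ) {τ : Finset ℕ} :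
    τ ∈ bd (cone v X) ↔ (v ∈ τ ∧ τ.erase v ∈ bd X) ∨ (v ∉ τ ∧ τ ∈ X) := by
  rw [mem_bd]
  have key : ((cone v X).filter fun σ => τ ⊆ σ ∧ τ.card + 1 = σ.card).card =
      (X.filter fun σ => τ ⊆ insert v σ ∧ τ.card = σ.card).card := by
    have : ((cone v X).filter fun σ => τ ⊆ σ ∧ τ.card + 1 = σ.card) =
        cone v (X.filter fun σ => τ ⊆ insert v σ ∧ τ.card = σ.card) := by
      unfold cone
      rw [Finset.filter_image]
      congr 1
      apply Finset.filter_congr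
      intro σ hσ
      rw [Finset.card_insert_of_notMem (hX σ hσ)]
      simp
    rw [this, card_cone]
    intro σ hσ
    exact hX σ (Finset.mem_filter.mp hσ).1
  rw [key]
  by_cases hv : v ∈ τ
  · simp only [hv, true_and, not_true, false_and, or_false]
    rw [mem_bd]
    have h1 : (X.filter fun σ => τ ⊆ insert v σ ∧ τ.card = σ.card) =
        (X.filter fun σ => τ.erase v ⊆ σ ∧ (τ.erase v).card + 1 = σ.card) := by
      apply Finset.filter_congr
      intro σ hσ
      rw [Finset.card_erase_add_one hv, Finset.subset_insert_iff]
    rw [h1]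
  · simp only [hv, false_and, not_false_eq_true, true_and, false_or]
    have h1 : (X.filter fun σ => τ ⊆ insert v σ ∧ τ.card = σ.card) =
        X.filter fun σ => σ = τ := by
      apply Finset.filter_congr
      intro σ hσ
      rw [Finset.subset_insert_iff_of_notMem hv]
      constructor
      · rintro ⟨h1, h2⟩
        exact (Finset.eq_of_subset_of_card_le h1 h2.ge).symm
      · rintro rfl
        exact ⟨subset_rfl, rfl⟩
    rw [h1, Finset.filter_eq']
    split_ifs with h <;> simp [h]

theorem bd_cone {v : ℕ} {X : Finset (Finset ℕ)} (hX : ∀ σ ∈ X, v ∉ σ)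
    (hb : ∀ σ ∈ bd X, v ∉ σ) : bd (cone v X) = X ∆ cone v (bd X) := by
  ext τ
  rw [mem_bd_cone hX, Finset.mem_symmDiff, mem_cone hb]
  have := hX τ
  tauto

theorem cone_collapsible (v : ℕ) (X : Finset (Finset ℕ)) (k : ℕ) (hX : ∀ σ ∈ X, v ∉ σ)
    (hk : ∀ σ ∈ X, σ.card = k) : Collapsible (cone v X) := by
  induction X using Finset.induction_on with
  | empty => exact Collapsible.empty
  | insert a X ha ih =>
    have hva := hX a (Finset.mem_insert_self _ _)
    have hX' : ∀ σ ∈ X, v ∉ σ := fun σ h => hX σ (Finset.mem_insert_of_mem h)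
    refine Collapsible.step _ (insert v a) a ?_ (Finset.subset_insert _ _)
      (Finset.card_insert_of_notMem hva).symm ?_ ?_
    · exact Finset.mem_image_of_mem _ (Finset.mem_insert_self _ _)
    · intro σ' hσ' hsub
      unfold cone at hσ'
      obtain ⟨σ, hσ, rfl⟩ := Finset.mem_image.mp hσ'
      rw [Finset.subset_insert_iff_of_notMem hva] at hsub
      rw [Finset.eq_of_subset_of_card_le hsub
        (by rw [hk σ hσ, hk a (Finset.mem_insert_self _ _)])]
    · have : (cone v (insert a X)).erase (insert v a) = cone v X := by
        have h0 : insert v a ∉ cone v X := by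
          rw [mem_cone hX', Finset.erase_insert hva]
          exact fun h => ha h.2
        unfold cone at h0 ⊢
        rw [Finset.image_insert, Finset.erase_insert h0]
      rw [this]
      exact ih hX' (fun σ h => hk σ (Finset.mem_insert_of_mem h))

theorem union_collapsible (v : ℕ) (X G : Finset (Finset ℕ)) (hc : Collapsible X)
    (hX : ∀ σ ∈ X, v ∉ σ) (hG : ∀ σ ∈ G, v ∉ σ) (hGc : Collapsible G) :
    Collapsible (cone v X ∪ G) := by
  induction hc with
  | empty => simpa [cone] using hGc
  | step X σ τ hσ hτ hcard huniq h ih =>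
    have hvσ := hX σ hσ
    have hvτ : v ∉ τ := fun h => hvσ (hτ h)
    have hX' : ∀ σ' ∈ X.erase σ, v ∉ σ' := fun σ' h => hX σ' (Finset.mem_of_mem_erase h)
    refine Collapsible.step _ (insert v σ) (insert v τ) ?_ (Finset.insert_subset_insert _ hτ)
      ?_ ?_ ?_
    · exact Finset.mem_union_left _ (Finset.mem_image_of_mem _ hσ)
    · rw [Finset.card_insert_of_notMem hvσ, Finset.card_insert_of_notMem hvτ, hcard]
    · intro σ' hσ' hsub
      have hv' : v ∈ σ' := hsub (Finset.mem_insert_self _ _)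
      rcases Finset.mem_union.mp hσ' with h1 | h1
      · unfold cone at h1
        obtain ⟨ρ, hρ, rfl⟩ := Finset.mem_image.mp h1
        rw [huniq ρ hρ]
        have h2 := (Finset.subset_insert v τ).trans hsub
        rwa [Finset.subset_insert_iff_of_notMem hvτ] at h2
      · exact absurd hv' (hG _ h1)
    · have : (cone v X ∪ G).erase (insert v σ) = cone v (X.erase σ) ∪ G := by
        ext ρ
        rw [Finset.mem_erase, Finset.mem_union, Finset.mem_union, mem_cone hX, mem_cone hX',
          Finset.mem_erase]
        constructor
        · rintro ⟨h1, ⟨h2, h3⟩ | h2⟩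
          · refine Or.inl ⟨h2, ?_, h3⟩
            rintro rfl
            exact h1 (Finset.insert_erase h2).symm
          · exact Or.inr h2
        · rintro (⟨h1, h2, h3⟩ | h1)
          · refine ⟨?_, Or.inl ⟨h1, h3⟩⟩
            rintro rfl
            exact h2 (Finset.erase_insert hvσ)
          · refine ⟨?_, Or.inr h1⟩
            rintro rfl
            exact hG _ h1 (Finset.mem_insert_self _ _)
      rw [this]
      exact ih hX'

theorem Collapsible.isAcyclic {X : Finset (Finset ℕ)} (h : Collapsible X) : IsAcyclic X := by
  induction h with
  | empty =>
    intro Y hY hne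
    exact absurd (Finset.subset_empty.mp hY) hne
  | step X σ τ hσ hτ hcard huniq h ih =>
    intro Y hY hne
    by_cases hs : σ ∈ Y
    · apply Finset.ne_empty_of_mem (a := τ)
      rw [mem_bd]
      have : (Y.filter fun σ => τ ⊆ σ ∧ τ.card + 1 = σ.card) = {σ} := by
        ext ρ
        rw [Finset.mem_filter, Finset.mem_singleton]
        constructor
        · rintro ⟨h1, h2, _⟩
          exact huniq ρ (hY h1) h2
        · rintro rfl
          exact ⟨hs, hτ, hcard⟩
      rw [this]
      simp
    · exact ih Y (Finset.subset_erase.mpr ⟨hY, hs⟩) hne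

/-- decomposition of a cycle at a vertex -/
theorem cycle_decomp {V : Finset ℕ} {d v : ℕ} {Z : Finset (Finset ℕ)}
    (hZ : Z ⊆ V.powersetCard (d + 1)) (hcyc : bd Z = ∅) :
    ∃ Z0 L : Finset (Finset ℕ), Z0 ⊆ (V.erase v).powersetCard (d + 1) ∧
      L ⊆ (V.erase v).powersetCard d ∧ Z = Z0 ∆ cone v L ∧ bd Z0 = L ∧ bd L = ∅ ∧
      ((∃ σ ∈ Z, v ∈ σ) → L ≠ ∅) := by
  have hL : link v Z ⊆ (V.erase v).powersetCard d := by
    intro τ hτ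
    unfold link at hτ
    obtain ⟨σ, hσ, rfl⟩ := Finset.mem_image.mp hτ
    rw [Finset.mem_filter] at hσ
    have := Finset.mem_powersetCard.mp (hZ hσ.1)
    rw [Finset.mem_powersetCard]
    exact ⟨Finset.erase_subset_erase _ this.1, by
      rw [Finset.card_erase_of_mem hσ.2, this.2]; rfl⟩
  have hZ0 : (Z.filter fun σ => v ∉ σ) ⊆ (V.erase v).powersetCard (d + 1) := by
    intro σ hσ
    rw [Finset.mem_filter] at hσ
    have := Finset.mem_powersetCard.mp (hZ hσ.1)
    rw [Finset.mem_powersetCard]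
    exact ⟨Finset.subset_erase.mpr ⟨this.1, hσ.2⟩, this.2⟩
  have nov : ∀ {k : ℕ} {Y : Finset (Finset ℕ)}, Y ⊆ (V.erase v).powersetCard k →
      ∀ σ ∈ Y, v ∉ σ := by
    intro k Y hY σ hσ hv
    exact Finset.notMem_erase v V ((Finset.mem_powersetCard.mp (hY hσ)).1 hv)
  have hLv := nov hL
  have hdec : Z = (Z.filter fun σ => v ∉ σ) ∆ cone v (link v Z) := by
    ext σ
    rw [Finset.mem_symmDiff, Finset.mem_filter, mem_cone hLv]
    have : v ∈ σ → (σ.erase v ∈ link v Z ↔ σ ∈ Z) := by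
      intro hv
      unfold link
      rw [Finset.mem_image]
      constructor
      · rintro ⟨ρ, hρ, he⟩
        rw [Finset.mem_filter] at hρ
        rw [← Finset.insert_erase hv, ← he, Finset.insert_erase hρ.2]
        exact hρ.1
      · intro h
        exact ⟨σ, Finset.mem_filter.mpr ⟨h, hv⟩, rfl⟩
    tauto
  have hb : bd (Z.filter fun σ => v ∉ σ) = bd (cone v (link v Z)) := by
    rw [hdec, bd_symmDiff] at hcyc
    exact symmDiff_eq_bot.mp hcyc
  have hbv := nov (bd_subset hZ0)
  refine ⟨_, link v Z, hZ0, hL, hdec, ?_, ?_, ?_⟩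
  · ext τ
    constructor
    · intro h
      have h1 := hbv τ h
      rw [hb, mem_bd_cone hLv] at h
      tauto
    · intro h
      rw [hb, mem_bd_cone hLv]
      exact Or.inr ⟨hLv τ h, h⟩
  · by_contra hne
    obtain ⟨τ, hτ⟩ := Finset.nonempty_iff_ne_empty.mpr hne
    have hvτ : v ∉ τ := by
      rw [mem_bd] at hτ
      obtain ⟨σ, hσ⟩ := Finset.card_pos.mp hτ.pos
      rw [Finset.mem_filter] at hσ
      exact fun h => hLv σ hσ.1 (hσ.2.1 h)
    have : insert v τ ∈ bd (cone v (link v Z)) := by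
      rw [mem_bd_cone hLv]
      left
      rw [Finset.erase_insert hvτ]
      exact ⟨Finset.mem_insert_self _ _, hτ⟩
    rw [← hb] at this
    exact hbv _ this (Finset.mem_insert_self _ _)
  · rintro ⟨σ, hσ, hv⟩
    apply Finset.ne_empty_of_mem (a := σ.erase v)
    unfold link
    exact Finset.mem_image_of_mem _ (Finset.mem_filter.mpr ⟨hσ, hv⟩)

/-- the lower bound on the size -/
def lb (n d : ℕ) : ℤ :=
  ((n - 1).choose d : ℤ) - (if 2 ≤ d then ((n - 1).choose (d - 2) : ℤ) else 0)

theorem lb_succ (n d : ℕ) (hn : 1 ≤ n) : lb (n + 1) (d + 1) = lb n (d + 1) + lb n d := by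
  obtain ⟨m, rfl⟩ := Nat.exists_eq_add_of_le' hn
  unfold lb
  rcases d with _ | _ | d
  · simp
  · simp [Nat.choose_succ_succ']
    ring
  · simp [Nat.choose_succ_succ']
    ring

theorem lb_nonpos (n : ℕ) : ∀ d, n + 1 ≤ 2 * d → lb n d ≤ 0 := by
  induction n with
  | zero =>
    intro d hd
    unfold lb
    have : (0 - 1).choose d = 0 := Nat.choose_eq_zero_of_lt (by omega)
    rw [this]
    split_ifs <;> simp
  | succ n ih =>
    intro d hd
    obtain ⟨e, rfl⟩ := Nat.exists_eq_add_of_le' (show 1 ≤ d by omega)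
    rcases Nat.eq_zero_or_pos n with rfl | hn
    · unfold lb
      have : (0 + 1 - 1).choose (e + 1) = 0 := Nat.choose_eq_zero_of_lt (by omega)
      rw [this]
      split_ifs <;> simp
    · by_cases he : n + 2 = 2 * (e + 1)
      · unfold lb
        have : (n + 1 - 1).choose (e + 1) = (n + 1 - 1).choose (e + 1 - 2) :=
          Nat.choose_symm_of_eq_add (by omega)
        rw [this, if_pos (by omega)]
        simp
      · rw [lb_succ n e hn]
        have h1 := ih (e + 1) (by omega)
        have h2 := ih e (by omega)
        omega

/-- the conclusion wanted of a filling -/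
def Good (V : Finset ℕ) (d : ℕ) (Z F : Finset (Finset ℕ)) : Prop :=
  F ⊆ V.powersetCard (d + 1) ∧ Collapsible F ∧ bd F = Z ∧ lb V.card d ≤ F.card

theorem notMem_of_sub {V : Finset ℕ} {k v : ℕ} {Y : Finset (Finset ℕ)}
    (hY : Y ⊆ (V.erase v).powersetCard k) : ∀ σ ∈ Y, v ∉ σ := by
  intro σ hσ hv
  exact Finset.notMem_erase v V ((Finset.mem_powersetCard.mp (hY hσ)).1 hv)

theorem cone_sub {V : Finset ℕ} {k v : ℕ} {Y : Finset (Finset ℕ)} (hv : v ∈ V)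
    (hY : Y ⊆ (V.erase v).powersetCard k) : cone v Y ⊆ V.powersetCard (k + 1) := by
  intro σ hσ
  unfold cone at hσ
  obtain ⟨ρ, hρ, rfl⟩ := Finset.mem_image.mp hσ
  have h1 := Finset.mem_powersetCard.mp (hY hρ)
  rw [Finset.mem_powersetCard, Finset.card_insert_of_notMem (notMem_of_sub hY ρ hρ), h1.2]
  exact ⟨Finset.insert_subset hv (h1.1.trans (Finset.erase_subset _ _)), rfl⟩

theorem cone_filling {V : Finset ℕ} {d : ℕ} {Z : Finset (Finset ℕ)} (hV : V.Nonempty)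
    (hZ : Z ⊆ V.powersetCard (d + 1)) (hcyc : bd Z = ∅) (hn : V.card + 1 ≤ 2 * (d + 1)) :
    ∃ F, Good V (d + 1) Z F := by
  obtain ⟨v, hv⟩ := hV
  obtain ⟨Z0, L, hZ0, hL, hdec, hb, -, -⟩ := cycle_decomp (v := v) hZ hcyc
  refine ⟨cone v Z0, cone_sub hv hZ0, ?_, ?_, ?_⟩
  · exact cone_collapsible v Z0 (d + 1) (notMem_of_sub hZ0)
      (fun σ h => (Finset.mem_powersetCard.mp (hZ0 h)).2)
  · rw [bd_cone (notMem_of_sub hZ0) (by rw [hb]; exact notMem_of_sub hL), hb, hdec]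
  · have := lb_nonpos _ _ hn
    omega

theorem combine {V : Finset ℕ} {d v : ℕ} {Z0 L F' G : Finset (Finset ℕ)} (hv : v ∈ V)
    (hV' : 1 ≤ (V.erase v).card)
    (hF' : Good (V.erase v) d L F') (hL : L ⊆ (V.erase v).powersetCard d)
    (hG : Good (V.erase v) (d + 1) (Z0 ∆ F') G) :
    Good V (d + 1) (Z0 ∆ cone v L) (cone v F' ∪ G) := by
  obtain ⟨f1, f2, f3, f4⟩ := hF'
  obtain ⟨g1, g2, g3, g4⟩ := hG
  have hdisj : Disjoint (cone v F') G := by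
    rw [Finset.disjoint_left]
    intro σ h1 h2
    exact notMem_of_sub g1 σ h2 ((mem_cone (notMem_of_sub f1)).mp h1).1
  refine ⟨?_, ?_, ?_, ?_⟩
  · apply Finset.union_subset (cone_sub hv f1)
    exact g1.trans (Finset.powersetCard_mono (Finset.erase_subset _ _))
  · exact union_collapsible v F' G f2 (notMem_of_sub f1) (notMem_of_sub g1) g2
  · have : cone v F' ∪ G = cone v F' ∆ G := (hdisj.symmDiff_eq_sup).symm
    rw [this, bd_symmDiff, bd_cone (notMem_of_sub f1) (by rw [f3]; exact notMem_of_sub hL),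
      f3, g3]
    ext σ
    simp only [Finset.mem_symmDiff]
    tauto
  · rw [Finset.card_union_of_disjoint hdisj, card_cone (notMem_of_sub f1)]
    have h1 : V.card = (V.erase v).card + 1 := (Finset.card_erase_add_one hv).symm
    rw [h1, lb_succ _ _ hV']
    push_cast
    omega

theorem combine_inj {V : Finset ℕ} {k l v : ℕ} {F₁ G₁ F₂ G₂ : Finset (Finset ℕ)}
    (f1 : F₁ ⊆ (V.erase v).powersetCard k) (f2 : F₂ ⊆ (V.erase v).powersetCard k)
    (g1 : G₁ ⊆ (V.erase v).powersetCard l) (g2 : G₂ ⊆ (V.erase v).powersetCard l)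
    (h : cone v F₁ ∪ G₁ = cone v F₂ ∪ G₂) : F₁ = F₂ := by
  have key : ∀ F G : Finset (Finset ℕ), F ⊆ (V.erase v).powersetCard k →
      G ⊆ (V.erase v).powersetCard l → ∀ σ, σ ∈ F ↔ v ∉ σ ∧ insert v σ ∈ cone v F ∪ G := by
    intro F G hF hG σ
    rw [Finset.mem_union, mem_cone (notMem_of_sub hF)]
    constructor
    · intro h
      have hv := notMem_of_sub hF σ h
      refine ⟨hv, Or.inl ⟨Finset.mem_insert_self _ _, ?_⟩⟩
      rwa [Finset.erase_insert hv]
    · rintro ⟨hv, ⟨_, h⟩ | h⟩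
      · rwa [Finset.erase_insert hv] at h
      · exact absurd (Finset.mem_insert_self _ _) (notMem_of_sub hG _ h)
  ext σ
  rw [key F₁ G₁ f1 g1, key F₂ G₂ f2 g2, h]

theorem main_aux (n : ℕ) : ∀ (V : Finset ℕ), V.card = n → V.Nonempty → ∀ (d : ℕ)
    (Z : Finset (Finset ℕ)), Z ⊆ V.powersetCard d → bd Z = ∅ → Z ≠ ∅ →
    ∃ S : Finset (Finset (Finset ℕ)), S.Nonempty ∧ n - 2 * d ≤ S.card ∧
      ∀ F ∈ S, Good V d Z F := by
  classical
  induction n with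
  | zero =>
    intro V hc hV
    exact absurd hc hV.card_pos.ne'
  | succ n ih =>
    intro V hc hV d Z hZ hcyc hne
    rcases d with _ | d
    · have hZe : Z = {∅} := by
        rw [Finset.powersetCard_zero] at hZ
        exact (Finset.subset_singleton_iff.mp hZ).resolve_left hne
      subst hZe
      refine ⟨V.image fun v => {{v}}, hV.image _, ?_, ?_⟩
      · rw [Finset.card_image_of_injective, hc]
        · omega
        · intro a b h
          simpa using h
      · intro F hF
        obtain ⟨v, hv, rfl⟩ := Finset.mem_image.mp hF
        have hcone : ({{v}} : Finset (Finset ℕ)) = cone v {∅} := by simp [cone]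
        have h0 : ∀ σ ∈ ({∅} : Finset (Finset ℕ)), v ∉ σ := by simp
        refine ⟨?_, ?_, ?_, ?_⟩
        · simpa [Finset.mem_powersetCard] using hv
        · rw [hcone]
          exact cone_collapsible v _ 0 h0 (by simp)
        · rw [hcone, bd_cone h0 (by simp [hcyc]), hcyc]
          simp [cone]
        · simp [lb]
    · by_cases hsmall : n + 1 + 1 ≤ 2 * (d + 1)
      · obtain ⟨F, hF⟩ := cone_filling hV hZ hcyc (by omega)
        refine ⟨{F}, Finset.singleton_nonempty _, by rw [Finset.card_singleton]; omega, ?_⟩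
        intro F1 h1
        rw [Finset.mem_singleton] at h1
        rwa [h1]
      · obtain ⟨σ, hσ⟩ := Finset.nonempty_iff_ne_empty.mpr hne
        have hσ' := Finset.mem_powersetCard.mp (hZ hσ)
        obtain ⟨v, hvσ⟩ := Finset.card_pos.mp (show 0 < σ.card by omega)
        have hv : v ∈ V := hσ'.1 hvσ
        have hc' : (V.erase v).card = n := by
          rw [Finset.card_erase_of_mem hv, hc]; rfl
        have hV' : (V.erase v).Nonempty := Finset.card_pos.mp (by omega)
        obtain ⟨Z0, L, hZ0, hL, hdec, hb, hLc, hLne⟩ := cycle_decomp (v := v) hZ hcyc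
        obtain ⟨S', hS'ne, hS'c, hS'⟩ := ih _ hc' hV' d L hL hLc (hLne ⟨σ, hσ, hvσ⟩)
        have hW : ∀ F' ∈ S', Z0 ∆ F' ⊆ (V.erase v).powersetCard (d + 1) ∧
            bd (Z0 ∆ F') = ∅ := by
          intro F' hF'
          obtain ⟨f1, f2, f3, f4⟩ := hS' F' hF'
          refine ⟨?_, ?_⟩
          · intro τ hτ
            rcases Finset.mem_symmDiff.mp hτ with h | h
            · exact hZ0 h.1
            · exact f1 h.1
          · rw [bd_symmDiff, hb, f3]
            exact symmDiff_self L
        by_cases hn : n + 1 = 2 * (d + 1)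
        · obtain ⟨F', hF'⟩ := hS'ne
          obtain ⟨G, hG⟩ := cone_filling hV' (hW F' hF').1 (hW F' hF').2 (by omega)
          refine ⟨{cone v F' ∪ G}, Finset.singleton_nonempty _,
            by rw [Finset.card_singleton]; omega, ?_⟩
          intro F1 h1
          rw [Finset.mem_singleton] at h1
          rw [h1, hdec]
          exact combine hv (by omega) (hS' F' hF') hL hG
        · have hex : ∀ F', ∃ G, F' ∈ S'.erase Z0 →
              Good (V.erase v) (d + 1) (Z0 ∆ F') G := by
            intro F'
            by_cases hF' : F' ∈ S'.erase Z0
            · rw [Finset.mem_erase] at hF'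
              obtain ⟨T, ⟨G, hG⟩, -, hT⟩ := ih _ hc' hV' (d + 1) (Z0 ∆ F') (hW F' hF'.2).1
                (hW F' hF'.2).2 (fun h => hF'.1 (symmDiff_eq_bot.mp h).symm)
              exact ⟨G, fun _ => hT G hG⟩
            · exact ⟨∅, fun h => absurd h hF'⟩
          choose G hG using hex
          have hcard : ((S'.erase Z0).image fun F' => cone v F' ∪ G F').card =
              (S'.erase Z0).card := by
            apply Finset.card_image_of_injOn
            intro a ha b hb' h
            exact combine_inj (hS' a (Finset.mem_of_mem_erase ha)).1
              (hS' b (Finset.mem_of_mem_erase hb')).1 (hG a ha).1 (hG b hb').1 h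
          have hle := Finset.pred_card_le_card_erase (s := S') (a := Z0)
          refine ⟨(S'.erase Z0).image fun F' => cone v F' ∪ G F', ?_, ?_, ?_⟩
          · rw [← Finset.card_pos, hcard]
            omega
          · rw [hcard]
            omega
          · intro F hF
            obtain ⟨F', hF', rfl⟩ := Finset.mem_image.mp hF
            rw [hdec]
            exact combine hv (by omega) (hS' F' (Finset.mem_of_mem_erase hF')) hL (hG F' hF')

/-- For every `d ≥ 1` and every nontrivial `(d-1)`-cycle `Z` on `[n]` over `F_2`, there
exists a collapsible acyclic set `F` of `d`-simplices on `[n]` with `∂F = Z` and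
`C(n-1,d) − |F| ≤ C(n-1,d-2)` (the bound being `0` for `d = 1`, by the convention
`C(m,k) = 0` for `k < 0`); moreover there are at least `n − 2d` distinct such `F`. -/
theorem exists_large_collapsible_forest_with_boundary (d n : ℕ) (hd : 1 ≤ d)
    (Z : Finset (Finset ℕ)) (hZ : Z ⊆ simplices (rng n) (d - 1))
    (hZcyc : bd Z = ∅) (hZne : Z ≠ ∅) :
    (∃ F, F ⊆ simplices (rng n) d ∧ Collapsible F ∧ IsAcyclic F ∧ bd F = Z ∧
        ((n - 1).choose d : ℤ) - F.card ≤ (if 2 ≤ d then ((n - 1).choose (d - 2) : ℤ) else 0)) ∧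
      ∃ S : Finset (Finset (Finset ℕ)), n - 2 * d ≤ S.card ∧
        ∀ F ∈ S, F ⊆ simplices (rng n) d ∧ Collapsible F ∧ IsAcyclic F ∧ bd F = Z ∧
          ((n - 1).choose d : ℤ) - F.card ≤ (if 2 ≤ d then ((n - 1).choose (d - 2) : ℤ) else 0) := by
  have hsimp : ∀ k, simplices (rng n) k = (rng n).powersetCard (k + 1) := by
    intro k
    ext σ
    simp [simplices, Finset.mem_powersetCard]
  have hcardn : (rng n).card = n := by simp [rng]
  rw [hsimp, Nat.sub_add_cancel hd] at hZ
  have hne : (rng n).Nonempty := by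
    obtain ⟨σ, hσ⟩ := Finset.nonempty_iff_ne_empty.mpr hZne
    have h1 := Finset.mem_powersetCard.mp (hZ hσ)
    exact (Finset.card_pos.mp (show 0 < σ.card by omega)).mono h1.1
  obtain ⟨S, ⟨F, hF⟩, hS, hgood⟩ := main_aux n (rng n) hcardn hne d Z hZ hZcyc hZne
  have conv : ∀ F ∈ S, F ⊆ simplices (rng n) d ∧ Collapsible F ∧ IsAcyclic F ∧ bd F = Z ∧
      ((n - 1).choose d : ℤ) - F.card ≤
        (if 2 ≤ d then ((n - 1).choose (d - 2) : ℤ) else 0) := by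
    intro F hF
    obtain ⟨h1, h2, h3, h4⟩ := hgood F hF
    rw [hsimp]
    refine ⟨h1, h2, h2.isAcyclic, h3, ?_⟩
    rw [hcardn] at h4
    unfold lb at h4
    linarith
  exact ⟨⟨F, conv F hF⟩, S, hS, conv⟩
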